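/- Let q ≥ 3 be an integer and let χ₀ be the principal Dirichlet character modulo q. Then lim_{s→1} (L(s,χ₀) − φ(q)/(q^s(s−1))) = (φ(q)/q)(log q + ∑_{p|q} (log p)/(p−1) + γ), where the sum is over primes p dividing q and γ is Euler's constant. -/

import Mathlib

open Filter Topology

/-!
Away from `s = 1`, `L(s, χ₀) = P(s) ζ(s)` with `P(s) = ∏_{p ∣ q} (1 - p⁻ˢ)`, and
`P(1) = φ(q) / q` is also the value at `1` of `G(s) = φ(q) q⁻ˢ`. Hence
`P(s) ζ(s) - G(s) / (s - 1) = P(s) (ζ(s) - 1 / (s - 1)) + (P(s) - G(s)) / (s - 1)`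
tends to `P(1) γ + P'(1) - G'(1)`, and the logarithmic derivative of `P` gives
`P'(1) = P(1) ∑_{p ∣ q} log p / (p - 1)`.
-/

theorem tendsto_mul_sub_div_of_simple_pole {𝕜 : Type*} [NontriviallyNormedField 𝕜]
    {f P G : 𝕜 → 𝕜} {a c P' G' : 𝕜}
    (hf : Tendsto (fun s ↦ f s - 1 / (s - a)) (𝓝[≠] a) (𝓝 c))
    (hP : HasDerivAt P P' a) (hG : HasDerivAt G G' a) (hPG : P a = G a) :
    Tendsto (fun s ↦ P s * f s - G s / (s - a)) (𝓝[≠] a) (𝓝 (P a * c + (P' - G'))) := by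
  have hPcont : Tendsto P (𝓝[≠] a) (𝓝 (P a)) := hP.continuousAt.continuousWithinAt
  have hslope : Tendsto (slope (P - G) a) (𝓝[≠] a) (𝓝 (P' - G')) := (hP.sub hG).tendsto_slope
  refine ((hPcont.mul hf).add hslope).congr fun s ↦ ?_
  simp only [slope_def_field, Pi.sub_apply, hPG]
  ring

section EulerFactor

open Complex

theorem hasDerivAt_cpow_neg {a : ℂ} (ha : a ≠ 0) (s : ℂ) :
    HasDerivAt (fun z : ℂ ↦ a ^ (-z)) (-(a ^ (-s) * log a)) s := by
  simpa using (hasDerivAt_neg s).const_cpow (c := a) (Or.inl ha)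

theorem logDeriv_one_sub_cpow_neg {a : ℂ} (ha : a ≠ 0) (s : ℂ) :
    logDeriv (fun z : ℂ ↦ 1 - a ^ (-z)) s = log a / (a ^ s - 1) := by
  have has : a ^ s ≠ 0 := by simp [cpow_eq_zero_iff, ha]
  rw [logDeriv_apply, ((hasDerivAt_cpow_neg ha s).const_sub 1).deriv, neg_neg, cpow_neg,
    ← mul_div_mul_left _ _ has, mul_inv_cancel_left₀ has, mul_sub, mul_one, mul_inv_cancel₀ has]

theorem hasDerivAt_prod_one_sub_cpow_neg {ι : Type*} {S : Finset ι} {a : ι → ℂ} {s : ℂ}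
    (ha : ∀ i ∈ S, a i ≠ 0) (has : ∀ i ∈ S, a i ^ s ≠ 1) :
    HasDerivAt (fun z : ℂ ↦ ∏ i ∈ S, (1 - a i ^ (-z)))
      ((∏ i ∈ S, (1 - a i ^ (-s))) * ∑ i ∈ S, log (a i) / (a i ^ s - 1)) s := by
  have hne : ∀ i ∈ S, 1 - a i ^ (-s) ≠ 0 := fun i hi ↦ by
    rw [cpow_neg, sub_ne_zero, ne_comm, Ne, inv_eq_one]
    exact has i hi
  have hdiff : ∀ i ∈ S, DifferentiableAt ℂ (fun z : ℂ ↦ 1 - a i ^ (-z)) s := fun i hi ↦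
    ((hasDerivAt_cpow_neg (ha i hi) s).const_sub 1).differentiableAt
  have hlog : logDeriv (fun z : ℂ ↦ ∏ i ∈ S, (1 - a i ^ (-z))) s =
      ∑ i ∈ S, log (a i) / (a i ^ s - 1) :=
    (logDeriv_prod hne hdiff).trans
      (Finset.sum_congr rfl fun i hi ↦ logDeriv_one_sub_cpow_neg (ha i hi) s)
  rw [← hlog, logDeriv_apply, mul_div_cancel₀ _ (Finset.prod_ne_zero_iff.mpr hne)]
  exact (DifferentiableAt.fun_finsetProd hdiff).hasDerivAt

end EulerFactor

theorem prod_primeFactors_one_sub_inv {K : Type*} [Field K] [CharZero K] {n : ℕ} (hn : n ≠ 0) :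
    ∏ p ∈ n.primeFactors, (1 - (p : K)⁻¹) = n.totient / n := by
  rw [eq_div_iff (Nat.cast_ne_zero.mpr hn), mul_comm]
  simpa using congrArg (Rat.cast : ℚ → K) (Nat.totient_eq_mul_prod_factors n).symm

theorem tendsto_LFunction_principal_sub_pole_general (q : ℕ) [NeZero q] :
    Tendsto
      (fun s : ℂ =>
        (1 : DirichletCharacter ℂ q).LFunction s - (q.totient : ℂ) / ((q : ℂ) ^ s * (s - 1)))
      (𝓝[≠] 1)
      (𝓝 (((q.totient : ℝ) / q *
        (Real.log q + (∑ p ∈ q.primeFactors, Real.log p / (p - 1)) +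
          Real.eulerMascheroniConstant) : ℝ))) := by
  have hP := hasDerivAt_prod_one_sub_cpow_neg (S := q.primeFactors) (a := fun p ↦ (p : ℂ)) (s := 1)
    (fun p hp ↦ Nat.cast_ne_zero.mpr (Nat.prime_of_mem_primeFactors hp).ne_zero)
    (fun p hp ↦ by simpa using (Nat.prime_of_mem_primeFactors hp).ne_one)
  have hG := (hasDerivAt_cpow_neg (Nat.cast_ne_zero.mpr (NeZero.ne q)) 1).const_mul (q.totient : ℂ)
  have hP_one : ∏ p ∈ q.primeFactors, (1 - (p : ℂ) ^ (-1 : ℂ)) = q.totient / q := by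
    simpa only [Complex.cpow_neg_one] using prod_primeFactors_one_sub_inv (NeZero.ne q)
  have hlim := tendsto_mul_sub_div_of_simple_pole tendsto_riemannZeta_sub_one_div hP hG
    (by rw [hP_one, Complex.cpow_neg_one, div_eq_mul_inv])
  convert hlim.congr' ?_ using 2
  · rw [hP_one, Complex.cpow_neg_one]
    simp only [Complex.cpow_one]
    push_cast [← Complex.natCast_log]
    ring
  · filter_upwards [self_mem_nhdsWithin] with s hs
    rw [← DirichletCharacter.LFunctionTrivChar_eq_mul_riemannZeta hs, Complex.cpow_neg,
      ← div_eq_mul_inv, div_div]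

/-- For `q ≥ 3` with principal character `χ₀` mod `q`:
`lim_{s→1} (L(s,χ₀) − φ(q)/(q^s(s−1))) = (φ(q)/q)(log q + ∑_{p|q} log p/(p−1) + γ)`. -/
theorem tendsto_LFunction_principal_sub_pole {q : ℕ} (hq : 3 ≤ q) :
    haveI : NeZero q := ⟨by omega⟩
    Tendsto
      (fun s : ℂ =>
        (1 : DirichletCharacter ℂ q).LFunction s - (q.totient : ℂ) / ((q : ℂ) ^ s * (s - 1)))
      (𝓝[≠] 1)
      (𝓝 (((q.totient : ℝ) / q *
        (Real.log q + (∑ p ∈ q.primeFactors, Real.log p / (p - 1)) +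
          Real.eulerMascheroniConstant) : ℝ))) :=
  haveI : NeZero q := ⟨by omega⟩
  tendsto_LFunction_principal_sub_pole_general q
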